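/- arXiv:2205.02961 — 5 statements merged into one kernel-verified Lean document; each statement's English description precedes it below -/
import Mathlib

section
/- Let S be a nonempty compact subset of EuclideanSpace ℝ (Fin 3) that is solid, i.e. S = closure (interior S). Then √2 · max(H_b(S), R_v(S)) ≥ max(H_b(S), H_i(S)). -/
open Metric MeasureTheory

noncomputable def Hb (S : Set (EuclideanSpace ℝ (Fin 3))) : ℝ :=
  Metric.hausdorffDist (frontier S) (frontier (convexHull ℝ S))

noncomputable def Hi (S : Set (EuclideanSpace ℝ (Fin 3))) : ℝ :=
  Metric.hausdorffDist S (convexHull ℝ S)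

noncomputable def Rv (S : Set (EuclideanSpace ℝ (Fin 3))) : ℝ :=
  (3 * ((volume (convexHull ℝ S)).toReal - (volume S).toReal) / (4 * Real.pi)) ^ ((1 : ℝ) / 3)

theorem ball_subset_interior_aux {K : Set (EuclideanSpace ℝ (Fin 3))} {x : EuclideanSpace ℝ (Fin 3)}
    {r : ℝ} (hx : x ∈ K) (h : ∀ y ∈ frontier K, r ≤ dist x y) : ball x r ⊆ interior K := by
  by_cases hr : 0 < r
  · have hmem : ∀ z ∈ ball x r, z ∉ frontier K := by
      intro z hz hzf
      have := h z hzf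
      rw [mem_ball, dist_comm] at hz
      linarith
    refine (convex_ball x r).isPreconnected.subset_left_of_subset_union isOpen_interior
      (isClosed_closure (s := K)).isOpen_compl ?_ ?_ ?_
    · exact Set.disjoint_left.2 fun a ha hb => hb (subset_closure (interior_subset ha))
    · intro z hz
      by_cases hzc : z ∈ closure K
      · left
        by_contra hzi
        exact hmem z hz ⟨hzc, hzi⟩
      · right; exact hzc
    · refine ⟨x, mem_ball_self hr, ?_⟩
      by_contra hzi
      exact hmem x (mem_ball_self hr) ⟨subset_closure hx, hzi⟩
  · rw [ball_eq_empty.2 (not_lt.1 hr)]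
    exact Set.empty_subset _

theorem inner_nonpos_aux {K : Set (EuclideanSpace ℝ (Fin 3))} (hK : Convex ℝ K)
    {x y s : EuclideanSpace ℝ (Fin 3)} (hb : ball x (dist x y) ⊆ interior K)
    (hy : y ∈ frontier K) (hs : s ∈ K) : inner ℝ (s - y) (y - x) ≤ 0 := by
  by_contra hpos
  push Not at hpos
  have hsy : 0 < ‖s - y‖ ^ 2 := by
    have : s - y ≠ 0 := by
      rintro h0
      rw [h0] at hpos
      simp at hpos
    positivity
  obtain ⟨t, ht, ht2⟩ : ∃ t : ℝ, 0 < t ∧ t * ‖s - y‖ ^ 2 < 2 * inner ℝ (s - y) (y - x) := by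
    refine ⟨inner ℝ (s - y) (y - x) / ‖s - y‖ ^ 2, by positivity, ?_⟩
    rw [div_mul_cancel₀ _ hsy.ne']
    linarith
  have hw : y - t • (s - y) ∈ ball x (dist x y) := by
    rw [mem_ball, dist_comm x y, dist_eq_norm, dist_eq_norm]
    have e : y - t • (s - y) - x = (y - x) - t • (s - y) := by abel
    rw [e]
    refine lt_of_pow_lt_pow_left₀ 2 (norm_nonneg _) ?_
    rw [norm_sub_sq_real, inner_smul_right, norm_smul, Real.norm_eq_abs, mul_pow, sq_abs,
      real_inner_comm]
    nlinarith
  refine hy.2 (hK.openSegment_interior_self_subset_interior (hb hw) hs ?_)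
  refine ⟨1 / (1 + t), t / (1 + t), by positivity, by positivity, by field_simp, ?_⟩
  have h1 : (1 + t) ≠ 0 := by positivity
  ext i
  simp
  field_simp
  ring

theorem sqrt_two_mul_max_Hb_Rv_ge (S : Set (EuclideanSpace ℝ (Fin 3)))
    (hne : S.Nonempty) (hcomp : IsCompact S) (hsolid : S = closure (interior S)) :
    Real.sqrt 2 * max (Hb S) (Rv S) ≥ max (Hb S) (Hi S) := by
  have hS := hne
  have hKb : Bornology.IsBounded (convexHull ℝ S) := isBounded_convexHull.2 hcomp.isBounded
  have hSK : S ⊆ convexHull ℝ S := subset_convexHull ℝ S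
  have hKne : (convexHull ℝ S).Nonempty := hne.mono hSK
  have hfr : ∀ T : Set (EuclideanSpace ℝ (Fin 3)), Bornology.IsBounded T → T.Nonempty →
      IsCompact (frontier T) ∧ (frontier T).Nonempty := by
    intro T hT hTn
    refine ⟨Metric.isCompact_of_isClosed_isBounded isClosed_frontier
      (hT.closure.subset frontier_subset_closure), nonempty_frontier_iff.2 ⟨hTn, ?_⟩⟩
    rintro rfl
    exact NormedSpace.unbounded_univ ℝ _ hT
  obtain ⟨hc1, hn1⟩ := hfr S hcomp.isBounded hne
  obtain ⟨hc2, hn2⟩ := hfr _ hKb hKne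
  have hfin : Metric.hausdorffEDist (frontier (convexHull ℝ S)) (frontier S) ≠ ⊤ :=
    hausdorffEDist_ne_top_of_nonempty_of_bounded hn2 hn1 hc2.isBounded hc1.isBounded
  have hb0 : 0 ≤ Hb S := hausdorffDist_nonneg
  have h2 : 1 ≤ Real.sqrt 2 := Real.one_le_sqrt.2 (by norm_num)
  have hsq : Real.sqrt 2 ^ 2 = 2 := Real.sq_sqrt (by norm_num)
  set M := max (Hb S) (Rv S) with hM
  have hbM : Hb S ≤ M := le_max_left _ _
  have hvM : Rv S ≤ M := le_max_right _ _
  have hM0 : 0 ≤ M := hb0.trans hbM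
  refine max_le (by nlinarith) ?_
  refine hausdorffDist_le_of_infDist (by positivity) ?_ ?_
  · intro x hx
    rw [infDist_zero_of_mem (hSK hx)]
    positivity
  intro x hx
  by_contra! hlt
  set d := infDist x S with hd
  have hd0 : 0 < d := lt_of_le_of_lt (by positivity) hlt
  set ρ := d / Real.sqrt 2 with hρ
  have hρ0 : 0 < ρ := by positivity
  have hρd : ρ * Real.sqrt 2 = d := by rw [hρ]; field_simp
  have hMρ : M < ρ := by
    rw [hρ, lt_div_iff₀ (by positivity)]; linarith
  obtain ⟨y, hy, hxy⟩ := hc2.exists_infDist_eq_dist hn2 x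
  have hball := ball_subset_interior_aux (r := dist x y) hx
    (fun z hz => hxy ▸ infDist_le_dist_of_mem hz)
  have hr : ρ ≤ dist x y := by
    obtain ⟨s, hs, hys⟩ := hc1.exists_infDist_eq_dist hn1 y
    have hsS : s ∈ S := hcomp.isClosed.frontier_subset hs
    have h3 : dist y s ≤ Hb S := by
      rw [← hys, Hb, hausdorffDist_comm]
      exact infDist_le_hausdorffDist_of_mem hy hfin
    have h4 : d ≤ dist x s := infDist_le_dist_of_mem hsS
    have h5 := inner_nonpos_aux (convex_convexHull ℝ S) hball hy (hSK hsS)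
    have h6 : dist x s ^ 2 ≤ dist y s ^ 2 + dist x y ^ 2 := by
      rw [dist_comm x s, dist_comm y s, dist_comm x y, dist_eq_norm, dist_eq_norm, dist_eq_norm]
      have e : s - x = (s - y) + (y - x) := by abel
      rw [e, norm_add_sq_real]
      linarith
    have h7 : d ^ 2 ≤ dist x s ^ 2 := by gcongr
    have h8 : dist y s ^ 2 ≤ ρ ^ 2 := by
      have : dist y s ≤ ρ := by linarith
      gcongr
    have h9 : d ^ 2 = 2 * ρ ^ 2 := by rw [← hρd, mul_pow, hsq]; ring
    exact (pow_le_pow_iff_left₀ hρ0.le dist_nonneg two_ne_zero).1 (by linarith)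
  have hsub : ball x ρ ⊆ convexHull ℝ S :=
    (ball_subset_ball hr).trans (hball.trans interior_subset)
  have hdisj : Disjoint (ball x ρ) S := by
    refine Set.disjoint_left.2 fun z hz hzS => ?_
    have h4 : d ≤ dist x z := infDist_le_dist_of_mem hzS
    rw [mem_ball, dist_comm] at hz
    nlinarith
  have hvol : volume (ball x ρ) + volume S ≤ volume (convexHull ℝ S) := by
    rw [← measure_union hdisj hcomp.measurableSet]
    exact measure_mono (Set.union_subset hsub hSK)
  have hvol' := ENNReal.toReal_mono hKb.measure_lt_top.ne hvol
  rw [ENNReal.toReal_add measure_ball_lt_top.ne hcomp.measure_lt_top.ne,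
    EuclideanSpace.volume_ball_fin_three] at hvol'
  have hv : (ENNReal.ofReal ρ ^ 3 * ENNReal.ofReal (Real.pi * 4 / 3)).toReal
      = ρ ^ 3 * (Real.pi * 4 / 3) := by
    rw [ENNReal.toReal_mul, ENNReal.toReal_pow, ENNReal.toReal_ofReal hρ0.le,
      ENNReal.toReal_ofReal (by positivity)]
  rw [hv] at hvol'
  have hfinal : ρ ≤ Rv S := by
    have e : ρ = (ρ ^ 3) ^ ((1 : ℝ) / 3) := by
      rw [← Real.rpow_natCast, ← Real.rpow_mul hρ0.le]; norm_num
    rw [Rv, e]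
    refine Real.rpow_le_rpow (by positivity) ?_ (by norm_num)
    rw [le_div_iff₀ (by positivity)]
    linarith
  linarith
end

section
/- Let S be a nonempty compact subset of EuclideanSpace ℝ (Fin 3) and let q ∈ convexHull ℝ S satisfy Metric.infDist q S ≤ Metric.infDist q ((convexHull ℝ S)ᶜ). Then Metric.infDist q S ≤ R_v(S). -/
open Metric MeasureTheory

theorem infDist_le_Rv_of_unobstructed (S : Set (EuclideanSpace ℝ (Fin 3)))
    (hne : S.Nonempty) (hcomp : IsCompact S)
    (q : EuclideanSpace ℝ (Fin 3)) (hq : q ∈ convexHull ℝ S)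
    (hle : Metric.infDist q S ≤ Metric.infDist q ((convexHull ℝ S)ᶜ)) :
    Metric.infDist q S ≤ Rv S := by
  have hr : 0 ≤ infDist q S := Metric.infDist_nonneg
  have hfin : volume (convexHull ℝ S) ≠ ⊤ :=
    (isBounded_convexHull.2 hcomp.isBounded).measure_lt_top.ne
  have hsub : ball q (infDist q S) ∪ S ⊆ convexHull ℝ S :=
    Set.union_subset ((ball_subset_ball hle).trans ball_infDist_compl_subset)
      (subset_convexHull ℝ S)
  have h1 : volume.real (ball q (infDist q S)) + volume.real S
      ≤ volume.real (convexHull ℝ S) := by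
    rw [← measureReal_union disjoint_ball_infDist hcomp.measurableSet
      measure_ball_lt_top.ne hcomp.measure_lt_top.ne]
    exact measureReal_mono hsub hfin
  have h2 : volume.real (ball q (infDist q S)) = infDist q S ^ 3 * (Real.pi * 4 / 3) := by
    rw [measureReal_def, EuclideanSpace.volume_ball_fin_three, ENNReal.toReal_mul,
      ENNReal.toReal_pow, ENNReal.toReal_ofReal hr, ENNReal.toReal_ofReal (by positivity)]
  rw [h2] at h1
  simp only [measureReal_def] at h1
  have h3 : infDist q S ^ 3 ≤
      3 * ((volume (convexHull ℝ S)).toReal - (volume S).toReal) / (4 * Real.pi) := by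
    rw [le_div_iff₀ (by positivity)]
    linarith
  unfold Rv
  calc infDist q S = (infDist q S ^ 3) ^ ((1 : ℝ) / 3) := by
        rw [← Real.rpow_natCast, ← Real.rpow_mul hr]
        norm_num
    _ ≤ _ := Real.rpow_le_rpow (by positivity) h3 (by norm_num)
end

section
/- Let E be a finite-dimensional real inner product space, let C ⊆ E be convex, let r > 0 and q ∈ E with Metric.closedBall q r ⊆ C, and let q₀ ∈ frontier C satisfy dist q q₀ = r. Then for every p ∈ C, the real inner product satisfies ⟪p − q₀, q − q₀⟫ ≥ 0. -/
open RealInnerProductSpace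

theorem inner_nonneg_of_inscribed_ball_touching {E : Type*} [NormedAddCommGroup E]
    [InnerProductSpace ℝ E] [FiniteDimensional ℝ E]
    (C : Set E) (hC : Convex ℝ C) (r : ℝ) (hr : 0 < r) (q : E)
    (hball : Metric.closedBall q r ⊆ C) (q₀ : E) (hq₀ : q₀ ∈ frontier C)
    (hd : dist q q₀ = r) :
    ∀ p ∈ C, 0 ≤ ⟪p - q₀, q - q₀⟫ := by
  intro p hp
  by_contra hneg
  rw [not_le] at hneg
  obtain ⟨t, ht, htu⟩ : ∃ t : ℝ, 0 < t ∧ t * ‖p - q₀‖ ^ 2 ≤ -⟪p - q₀, q - q₀⟫ := by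
    refine ⟨-⟪p - q₀, q - q₀⟫ / (‖p - q₀‖ ^ 2 + 1), by apply div_pos <;> [linarith; positivity], ?_⟩
    rw [div_mul_eq_mul_div, div_le_iff₀ (by positivity)]
    nlinarith
  have hy : q₀ - t • (p - q₀) ∈ interior C := by
    refine interior_mono hball (Metric.ball_subset_interior_closedBall ?_)
    rw [Metric.mem_ball, dist_comm, dist_eq_norm]
    rw [dist_eq_norm] at hd
    have e : q - (q₀ - t • (p - q₀)) = (q - q₀) + t • (p - q₀) := by abel
    rw [e]
    have h2 := norm_add_sq_real (q - q₀) (t • (p - q₀))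
    rw [inner_smul_right, real_inner_comm, norm_smul, Real.norm_of_nonneg ht.le, hd] at h2
    apply lt_of_pow_lt_pow_left₀ 2 hr.le
    rw [h2]
    nlinarith [mul_le_mul_of_nonneg_left htu ht.le, mul_neg_of_pos_of_neg ht hneg]
  refine hq₀.2 (hC.openSegment_interior_self_subset_interior hy hp ?_)
  refine ⟨1 / (1 + t), t / (1 + t), by positivity, by positivity, by field_simp, ?_⟩
  have h1 : (1 + t) ≠ 0 := by positivity
  match_scalars <;> field_simp <;> ring
end

section
/- Let E be a finite-dimensional real inner product space, let C ⊆ E be convex, let r > 0 and q ∈ E with Metric.closedBall q r ⊆ C, and let q₀ ∈ frontier C satisfy dist q q₀ = r. Then for every p ∈ C, dist p q ≤ Real.sqrt (r² + (dist p q₀)²). -/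
theorem dist_le_sqrt_of_inscribed_ball_touching {E : Type*} [NormedAddCommGroup E]
    [InnerProductSpace ℝ E] [FiniteDimensional ℝ E]
    (C : Set E) (hC : Convex ℝ C) (r : ℝ) (hr : 0 < r) (q : E)
    (hball : Metric.closedBall q r ⊆ C) (q₀ : E) (hq₀ : q₀ ∈ frontier C)
    (hd : dist q q₀ = r) :
    ∀ p ∈ C, dist p q ≤ Real.sqrt (r ^ 2 + (dist p q₀) ^ 2) := by
  intro p hp
  have hv : ‖q - q₀‖ = r := by rw [← dist_eq_norm, hd]
  have key : 0 ≤ inner ℝ (q - q₀) (p - q₀) := by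
    by_contra hneg
    have hc := not_le.mp hneg
    set c : ℝ := inner ℝ (q - q₀) (p - q₀) with hcdef
    have hN : 0 < ‖p - q₀‖ ^ 2 + 1 := by positivity
    obtain ⟨t, ht⟩ : ∃ t : ℝ, t = -c / (‖p - q₀‖ ^ 2 + 1) := ⟨_, rfl⟩
    have ht0 : 0 < t := by rw [ht]; exact div_pos (by linarith) hN
    have hteq : t * (‖p - q₀‖ ^ 2 + 1) = -c := by rw [ht]; field_simp
    have hx : q₀ - t • (p - q₀) ∈ interior C := by
      refine interior_mono (Metric.ball_subset_closedBall.trans hball) ?_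
      rw [Metric.isOpen_ball.interior_eq, Metric.mem_ball, dist_comm, dist_eq_norm]
      have e : q - (q₀ - t • (p - q₀)) = (q - q₀) + t • (p - q₀) := by abel
      rw [e]
      refine lt_of_pow_lt_pow_left₀ 2 hr.le ?_
      rw [norm_add_sq_real, inner_smul_right, ← hcdef, hv, norm_smul, mul_pow,
        Real.norm_eq_abs, sq_abs]
      have : t * (2 * c + t * ‖p - q₀‖ ^ 2) < 0 :=
        mul_neg_of_pos_of_neg ht0 (by linarith)
      nlinarith
    have h := hC.combo_interior_closure_mem_interior hx (subset_closure hp)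
      (a := 1 / (1 + t)) (b := t / (1 + t)) (by positivity) (by positivity) (by field_simp)
    have e : (1 / (1 + t)) • (q₀ - t • (p - q₀)) + (t / (1 + t)) • p = q₀ := by
      have h1 : (1 + t) ≠ 0 := by positivity
      match_scalars <;> field_simp <;> ring
    rw [e] at h
    exact hq₀.2 h
  apply Real.le_sqrt_of_sq_le
  have e : p - q = (p - q₀) - (q - q₀) := by abel
  rw [dist_eq_norm, dist_eq_norm, e, norm_sub_sq_real, real_inner_comm, hv]
  linarith
end

section
/- Let S be a nonempty compact subset of EuclideanSpace ℝ (Fin 3) and let q ∈ convexHull ℝ S satisfy Metric.infDist q ((convexHull ℝ S)ᶜ) ≤ Metric.infDist q S. Then Metric.infDist q S ≤ Real.sqrt (R_v(S)² + H_b(S)²). -/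
open Metric MeasureTheory

theorem aux_vol (S : Set (EuclideanSpace ℝ (Fin 3)))
    (hcomp : IsCompact S) (q : EuclideanSpace ℝ (Fin 3))
    (hle : Metric.infDist q ((convexHull ℝ S)ᶜ) ≤ Metric.infDist q S) :
    Metric.infDist q ((convexHull ℝ S)ᶜ) ≤ Rv S := by
  set r := Metric.infDist q ((convexHull ℝ S)ᶜ) with hr
  have hr0 : 0 ≤ r := infDist_nonneg
  have hK : Bornology.IsBounded (convexHull ℝ S) := isBounded_convexHull.2 hcomp.isBounded
  have hsub : ball q r ⊆ convexHull ℝ S := ball_infDist_compl_subset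
  have hdis : Disjoint (ball q r) S :=
    (disjoint_ball_infDist (x := q) (s := S)).mono_left (ball_subset_ball hle)
  have h1 : volume (ball q r) + volume S ≤ volume (convexHull ℝ S) := by
    rw [← measure_union hdis hcomp.measurableSet]
    exact measure_mono (Set.union_subset hsub (subset_convexHull ℝ S))
  have h2 : (volume (ball q r)).toReal + (volume S).toReal ≤ (volume (convexHull ℝ S)).toReal := by
    rw [← ENNReal.toReal_add measure_ball_lt_top.ne hcomp.measure_lt_top.ne]
    exact ENNReal.toReal_mono hK.measure_lt_top.ne h1
  have h3 : (volume (ball q r)).toReal = r ^ 3 * (Real.pi * 4 / 3) := by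
    rw [EuclideanSpace.volume_ball_fin_three]
    rw [ENNReal.toReal_mul, ENNReal.toReal_pow, ENNReal.toReal_ofReal hr0,
      ENNReal.toReal_ofReal (by positivity)]
  have h4 : r ^ 3 ≤ 3 * ((volume (convexHull ℝ S)).toReal - (volume S).toReal) / (4 * Real.pi) := by
    rw [le_div_iff₀ (by positivity)]
    linarith
  unfold Rv
  calc r = (r ^ 3) ^ ((1 : ℝ) / 3) := by
        rw [← Real.rpow_natCast, ← Real.rpow_mul hr0]; norm_num
    _ ≤ _ := Real.rpow_le_rpow (by positivity) h4 (by norm_num)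

theorem aux_inner {K : Set (EuclideanSpace ℝ (Fin 3))} (hK : Convex ℝ K)
    {q q0 p : EuclideanSpace ℝ (Fin 3)} (hsub : ball q (dist q q0) ⊆ K)
    (hq0 : q0 ∉ interior K) (hp : p ∈ K) : inner ℝ (p - q0) (q0 - q) ≤ 0 := by
  by_contra! h
  set a := inner ℝ (p - q0) (q0 - q) with ha
  have hne : p - q0 ≠ 0 := by
    intro h0
    rw [ha, h0, inner_zero_left] at h
    exact lt_irrefl _ h
  have hn : 0 < ‖p - q0‖ := norm_pos_iff.2 hne
  set t := a / ‖p - q0‖ ^ 2 with ht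
  have htp : 0 < t := by positivity
  have hta : t * ‖p - q0‖ ^ 2 = a := by rw [ht]; field_simp
  have hz : q0 - t • (p - q0) ∈ interior K := by
    apply interior_maximal hsub isOpen_ball
    rw [mem_ball, dist_eq_norm, dist_comm, dist_eq_norm]
    apply lt_of_pow_lt_pow_left₀ 2 (norm_nonneg _)
    have e : q0 - t • (p - q0) - q = (q0 - q) - t • (p - q0) := by abel
    rw [e, norm_sub_sq_real, inner_smul_right, real_inner_comm, ← ha, norm_smul, mul_pow,
      Real.norm_of_nonneg htp.le]
    nlinarith [mul_pos htp h]
  apply hq0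
  apply hK.openSegment_interior_self_subset_interior hz hp
  refine ⟨1 / (1 + t), t / (1 + t), by positivity, by positivity, by field_simp, ?_⟩
  have h1 : (1 + t) ≠ 0 := by positivity
  ext i
  simp
  field_simp
  ring

theorem infDist_le_sqrt_of_obstructed (S : Set (EuclideanSpace ℝ (Fin 3)))
    (hne : S.Nonempty) (hcomp : IsCompact S)
    (q : EuclideanSpace ℝ (Fin 3)) (hq : q ∈ convexHull ℝ S)
    (hle : Metric.infDist q ((convexHull ℝ S)ᶜ) ≤ Metric.infDist q S) :
    Metric.infDist q S ≤ Real.sqrt (Rv S ^ 2 + Hb S ^ 2) := by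
  have hrv := aux_vol S hcomp q hle
  have hK : Bornology.IsBounded (convexHull ℝ S) := isBounded_convexHull.2 hcomp.isBounded
  have hfr : (frontier S).Nonempty := nonempty_frontier_iff.2 ⟨hne, hcomp.ne_univ⟩
  obtain ⟨q0, hq0, hd⟩ := exists_mem_frontier_infDist_compl_eq_dist hq
    (fun h => NormedSpace.unbounded_univ ℝ (EuclideanSpace ℝ (Fin 3)) (h ▸ hK))
  have hfS : IsCompact (frontier S) :=
    hcomp.of_isClosed_subset isClosed_frontier hcomp.isClosed.frontier_subset
  have hfK : Bornology.IsBounded (frontier (convexHull ℝ S)) :=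
    hK.closure.subset frontier_subset_closure
  obtain ⟨p, hp, hpd⟩ := hfS.exists_infDist_eq_dist hfr q0
  have hH : dist q0 p ≤ Hb S := by
    rw [← hpd, Hb, hausdorffDist_comm]
    exact infDist_le_hausdorffDist_of_mem hq0
      (hausdorffEDist_ne_top_of_nonempty_of_bounded ⟨q0, hq0⟩ hfr hfK hfS.isBounded)
  have hpS : p ∈ S := hcomp.isClosed.frontier_subset hp
  have hin := aux_inner (convex_convexHull ℝ S) (q := q) (q0 := q0)
    (by rw [← hd]; exact ball_infDist_compl_subset) hq0.2 (subset_convexHull ℝ S hpS)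
  apply (infDist_le_dist_of_mem hpS).trans
  apply Real.le_sqrt_of_sq_le
  have h1 : dist q q0 ^ 2 ≤ Rv S ^ 2 := by
    rw [← hd]; exact pow_le_pow_left₀ infDist_nonneg hrv 2
  have h2 : dist q0 p ^ 2 ≤ Hb S ^ 2 := pow_le_pow_left₀ dist_nonneg hH 2
  have h3 : dist q p ^ 2 = dist q0 p ^ 2 + 2 * inner ℝ (p - q0) (q0 - q) + dist q q0 ^ 2 := by
    rw [dist_comm q p, dist_comm q0 p, dist_comm q q0, dist_eq_norm, dist_eq_norm, dist_eq_norm,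
      ← norm_add_sq_real]
    congr 2; abel
  linarith
end
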